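/- Let X, X', Y, Y' be finite types, set I := X × X' and J := Y × Y', let (M_t, M_f) be a binary measurement on ℂ^X and (N_t, N_f) a binary measurement on ℂ^Y. For each t ∈ {true, false} let E_t : Matrix I I ℂ → Matrix I I ℂ and F_t : Matrix J J ℂ → Matrix J J ℂ be linear maps that map positive semidefinite matrices to positive semidefinite matrices and are trace-preserving. Let A_true, A_false, B be expectations on I × J. Write M_{t,1} := (M_t ⊗ 1_{X'}) ⊗ 1_J and N_{u,2} := 1_I ⊗ (N_u ⊗ 1_{Y'}), and set R*_{t,u}(A) := M_{t,1}ᴴ * N_{u,2}ᴴ * A * N_{u,2} * M_{t,1}. Define 𝐄(ρ) := E_true((M_t ⊗ 1_{X'}) * ρ * (M_t ⊗ 1_{X'})ᴴ) + E_false((M_f ⊗ 1_{X'}) * ρ * (M_f ⊗ 1_{X'})ᴴ) and 𝐅(σ) := F_true((N_t ⊗ 1_{Y'}) * σ * (N_t ⊗ 1_{Y'})ᴴ) + F_false((N_f ⊗ 1_{Y'}) * σ * (N_f ⊗ 1_{Y'})ᴴ). If qRHL(A_true, E_true, F_true, B) and qRHL(A_false, E_false, F_false, B) hold, then qRHL(R*_{true,true}(A_true)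 + R*_{false,false}(A_false), 𝐄, 𝐅, B) holds. [Rule JointIf] -/

import Mathlib

open Matrix Kronecker ComplexOrder

noncomputable section

/-- Partial trace over the second factor: `tr₂(ρ) i i' = ∑ j, ρ (i,j) (i',j)`. -/
def trB {I J : Type*} [Fintype J] (ρ : Matrix (I × J) (I × J) ℂ) : Matrix I I ℂ :=
  Matrix.of fun i i' => ∑ j, ρ (i, j) (i', j)

/-- Partial trace over the first factor: `tr₁(ρ) j j' = ∑ i, ρ (i,j) (i,j')`. -/
def trA {I J : Type*} [Fintype I] (ρ : Matrix (I × J) (I × J) ℂ) : Matrix J J ℂ :=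
  Matrix.of fun j j' => ∑ i, ρ (i, j) (i, j')

/-- `ρ` is separable iff it is a finite sum of Kronecker products of
positive semidefinite matrices. -/
def Separable {I J : Type*} [Fintype I] [Fintype J]
    (ρ : Matrix (I × J) (I × J) ℂ) : Prop :=
  ∃ (n : ℕ) (σ : Fin n → Matrix I I ℂ) (τ : Fin n → Matrix J J ℂ),
    (∀ k, (σ k).PosSemidef) ∧ (∀ k, (τ k).PosSemidef) ∧ ρ = ∑ k, σ k ⊗ₖ τ k

/-- The expectation-qRHL judgment `qRHL(A, E1, E2, B)`. -/
def qRHL {I J : Type*} [Fintype I] [Fintype J]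
    (A : Matrix (I × J) (I × J) ℂ)
    (E1 : Matrix I I ℂ → Matrix I I ℂ) (E2 : Matrix J J ℂ → Matrix J J ℂ)
    (B : Matrix (I × J) (I × J) ℂ) : Prop :=
  ∀ ρ : Matrix (I × J) (I × J) ℂ, ρ.PosSemidef → Separable ρ →
    ∃ ρ' : Matrix (I × J) (I × J) ℂ, ρ'.PosSemidef ∧ Separable ρ' ∧
      trB ρ' = E1 (trB ρ) ∧ trA ρ' = E2 (trA ρ) ∧
      (Matrix.trace (A * ρ)).re ≤ (Matrix.trace (B * ρ')).re

/-!
A separable `ρ` splits into the unnormalised post-measurement states `(P t ⊗ Q u) ρ (P t ⊗ Q u)ᴴ`,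
which are again separable. By completeness, summing over the outcomes of one measurement does not
affect the marginal on the other side, so judgments for all pairs of branches combine into one for
the measured programs. For an off-diagonal pair the precondition is `0`, and applying the two
positive trace-preserving maps to the factors of a separable state gives a valid coupling.
-/

section Kronecker

variable {ι R I I' J J' : Type*}

lemma sum_kronecker [NonUnitalNonAssocSemiring R] (s : Finset ι) (A : ι → Matrix I' I R)
    (B : Matrix J' J R) : (∑ t ∈ s, A t) ⊗ₖ B = ∑ t ∈ s, A t ⊗ₖ B := by
  ext
  simp [Matrix.sum_apply, Finset.sum_mul]

lemma kronecker_sum [NonUnitalNonAssocSemiring R] (s : Finset ι) (A : Matrix I' I R)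
    (B : ι → Matrix J' J R) : A ⊗ₖ (∑ t ∈ s, B t) = ∑ t ∈ s, A ⊗ₖ B t := by
  ext
  simp [Matrix.sum_apply, Finset.mul_sum]

lemma submatrix_swap_kronecker [CommMagma R] (A : Matrix I' I R) (B : Matrix J' J R) :
    (A ⊗ₖ B).submatrix Prod.swap Prod.swap = B ⊗ₖ A := by
  ext
  simp [mul_comm]

variable [Fintype I'] [Fintype J] [Fintype J'] [DecidableEq I'] [DecidableEq J]

lemma conj_one_kronecker_conj_kronecker_one [CommSemiring R] [StarRing R] (P : Matrix I' I R)
    (Q : Matrix J' J R) (A : Matrix (I' × J') (I' × J') R) :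
    (P ⊗ₖ (1 : Matrix J J R))ᴴ * ((1 : Matrix I' I' R) ⊗ₖ Q)ᴴ * A *
        ((1 : Matrix I' I' R) ⊗ₖ Q) * (P ⊗ₖ (1 : Matrix J J R)) =
      (P ⊗ₖ Q)ᴴ * A * (P ⊗ₖ Q) := by
  have hPQ : ((1 : Matrix I' I' R) ⊗ₖ Q) * (P ⊗ₖ (1 : Matrix J J R)) = P ⊗ₖ Q := by
    rw [← mul_kronecker_mul, Matrix.one_mul, Matrix.mul_one]
  rw [← hPQ, conjTranspose_mul]
  simp only [Matrix.mul_assoc]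

end Kronecker

section Measurement

variable {ι X Y Z : Type*} [Fintype ι] [Fintype Y] [Fintype Z] [DecidableEq X] [DecidableEq Z]

/-- A family of Kraus operators satisfying the completeness relation, i.e. a measurement with
outcomes in `ι`. The post-measurement space `Y` may differ from `X`. -/
def IsMeasurement (M : ι → Matrix Y X ℂ) : Prop :=
  ∑ t, (M t)ᴴ * M t = 1

lemma IsMeasurement.kronecker_one {M : ι → Matrix Y X ℂ} (hM : IsMeasurement M) :
    IsMeasurement fun t => M t ⊗ₖ (1 : Matrix Z Z ℂ) := by
  have hsum : ∑ t, (M t)ᴴ * M t = 1 := hM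
  simp only [IsMeasurement, conjTranspose_kronecker, ← mul_kronecker_mul, ← sum_kronecker, hsum,
    conjTranspose_one, Matrix.mul_one, one_kronecker_one]

end Measurement

section Trace

variable {K L : Type*} [Fintype K] [Fintype L]

open scoped MatrixOrder Matrix.Norms.L2Operator in
lemma trace_mul_nonneg_of_posSemidef {𝕜 : Type*} [RCLike 𝕜] {B ρ : Matrix K K 𝕜}
    (hB : B.PosSemidef) (hρ : ρ.PosSemidef) : 0 ≤ (B * ρ).trace := by
  classical
  obtain ⟨C, rfl⟩ := CStarAlgebra.nonneg_iff_eq_star_mul_self.mp hB.nonneg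
  rw [Matrix.mul_assoc, trace_mul_comm]
  exact (hρ.mul_mul_conjTranspose_same C).trace_nonneg

lemma trace_conjTranspose_mul_mul_mul {R : Type*} [NonUnitalCommSemiring R] [Star R]
    (T : Matrix L K R) (A : Matrix L L R) (ρ : Matrix K K R) :
    (Tᴴ * A * T * ρ).trace = (A * (T * ρ * Tᴴ)).trace := by
  rw [Matrix.mul_assoc, Matrix.mul_assoc, trace_mul_comm, Matrix.mul_assoc]

end Trace

section PartialTrace

variable {ι κ I I' J J' : Type*}

lemma trA_eq_trB_submatrix_swap [Fintype I] (ρ : Matrix (I × J) (I × J) ℂ) :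
    trA ρ = trB (ρ.submatrix Prod.swap Prod.swap) :=
  rfl

lemma trB_eq_sum_submatrix [Fintype J] (ρ : Matrix (I × J) (I × J) ℂ) :
    trB ρ = ∑ j, ρ.submatrix (·, j) (·, j) := by
  ext
  simp [trB, Matrix.sum_apply]

lemma trB_sum [Fintype J] (s : Finset ι) (ρ : ι → Matrix (I × J) (I × J) ℂ) :
    trB (∑ t ∈ s, ρ t) = ∑ t ∈ s, trB (ρ t) := by
  ext i i'
  simp only [trB, of_apply, Matrix.sum_apply]
  exact Finset.sum_comm

lemma trA_sum [Fintype I] (s : Finset ι) (ρ : ι → Matrix (I × J) (I × J) ℂ) :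
    trA (∑ t ∈ s, ρ t) = ∑ t ∈ s, trA (ρ t) := by
  ext j j'
  simp only [trA, of_apply, Matrix.sum_apply]
  exact Finset.sum_comm

lemma trB_kronecker [Fintype J] (σ : Matrix I I ℂ) (τ : Matrix J J ℂ) :
    trB (σ ⊗ₖ τ) = τ.trace • σ := by
  ext i i'
  simp [trB, Matrix.trace, ← Finset.mul_sum, mul_comm]

lemma trA_kronecker [Fintype I] (σ : Matrix I I ℂ) (τ : Matrix J J ℂ) :
    trA (σ ⊗ₖ τ) = σ.trace • τ := by
  ext j j'
  simp [trA, Matrix.trace, Finset.sum_mul]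

variable [Fintype I] [Fintype J]

lemma trB_kronecker_one_mul_mul [DecidableEq J] (P : Matrix I' I ℂ)
    (ρ : Matrix (I × J) (I × J) ℂ) (R : Matrix I I' ℂ) :
    trB ((P ⊗ₖ (1 : Matrix J J ℂ)) * ρ * (R ⊗ₖ (1 : Matrix J J ℂ))) = P * trB ρ * R := by
  have hblock j : ((P ⊗ₖ (1 : Matrix J J ℂ)) * ρ * (R ⊗ₖ (1 : Matrix J J ℂ))).submatrix
      (·, j) (·, j) = P * ρ.submatrix (·, j) (·, j) * R := by
    ext
    simp [mul_apply, Fintype.sum_prod_type, one_apply]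
  simp only [trB_eq_sum_submatrix, hblock, Matrix.mul_sum, Matrix.sum_mul]

lemma trB_one_kronecker_mul_comm [Fintype J'] [DecidableEq I] (Q : Matrix J' J ℂ)
    (ρ : Matrix (I × J) (I × J') ℂ) :
    trB (((1 : Matrix I I ℂ) ⊗ₖ Q) * ρ) = trB (ρ * ((1 : Matrix I I ℂ) ⊗ₖ Q)) := by
  ext i i'
  simp [trB, mul_apply, Fintype.sum_prod_type, one_apply, mul_comm, Finset.sum_comm (γ := J)]

lemma trB_conj_kronecker [Fintype J'] [DecidableEq I] (P : Matrix I' I ℂ)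
    (Q : Matrix J' J ℂ) (ρ : Matrix (I × J) (I × J) ℂ) :
    trB ((P ⊗ₖ Q) * ρ * (P ⊗ₖ Q)ᴴ) = P * trB (ρ * ((1 : Matrix I I ℂ) ⊗ₖ (Qᴴ * Q))) * Pᴴ := by
  classical
  have hleft : P ⊗ₖ Q = (P ⊗ₖ (1 : Matrix J' J' ℂ)) * ((1 : Matrix I I ℂ) ⊗ₖ Q) := by
    rw [← mul_kronecker_mul, Matrix.one_mul, Matrix.mul_one]
  have hright : (P ⊗ₖ Q)ᴴ = ((1 : Matrix I I ℂ) ⊗ₖ Qᴴ) * (Pᴴ ⊗ₖ (1 : Matrix J' J' ℂ)) := by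
    rw [← mul_kronecker_mul, Matrix.one_mul, Matrix.mul_one, conjTranspose_kronecker]
  calc trB ((P ⊗ₖ Q) * ρ * (P ⊗ₖ Q)ᴴ)
      = trB ((P ⊗ₖ (1 : Matrix J' J' ℂ)) *
          (((1 : Matrix I I ℂ) ⊗ₖ Q) * (ρ * ((1 : Matrix I I ℂ) ⊗ₖ Qᴴ))) *
          (Pᴴ ⊗ₖ (1 : Matrix J' J' ℂ))) := by
        rw [hright, hleft]
        simp only [Matrix.mul_assoc]
    _ = P * trB (((1 : Matrix I I ℂ) ⊗ₖ Q) * (ρ * ((1 : Matrix I I ℂ) ⊗ₖ Qᴴ))) * Pᴴ :=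
        trB_kronecker_one_mul_mul _ _ _
    _ = P * trB (ρ * ((1 : Matrix I I ℂ) ⊗ₖ (Qᴴ * Q))) * Pᴴ := by
        rw [trB_one_kronecker_mul_comm, Matrix.mul_assoc ρ, ← mul_kronecker_mul, Matrix.one_mul]

lemma IsMeasurement.sum_trB_conj [Fintype κ] [Fintype J'] [DecidableEq J]
    {Q : κ → Matrix J' J ℂ} (hQ : IsMeasurement Q) (P : Matrix I' I ℂ)
    (ρ : Matrix (I × J) (I × J) ℂ) :
    ∑ u, trB ((P ⊗ₖ Q u) * ρ * (P ⊗ₖ Q u)ᴴ) = P * trB ρ * Pᴴ := by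
  classical
  have hsum : ∑ u, (Q u)ᴴ * Q u = 1 := hQ
  simp only [trB_conj_kronecker, ← Matrix.sum_mul, ← Matrix.mul_sum, ← trB_sum, ← kronecker_sum,
    hsum, one_kronecker_one, Matrix.mul_one]

lemma IsMeasurement.sum_trA_conj [Fintype ι] [Fintype I'] [DecidableEq I]
    {P : ι → Matrix I' I ℂ} (hP : IsMeasurement P) (Q : Matrix J' J ℂ)
    (ρ : Matrix (I × J) (I × J) ℂ) :
    ∑ t, trA ((P t ⊗ₖ Q) * ρ * (P t ⊗ₖ Q)ᴴ) = Q * trA ρ * Qᴴ := by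
  have hswap t : ((P t ⊗ₖ Q) * ρ * (P t ⊗ₖ Q)ᴴ).submatrix Prod.swap Prod.swap =
      (Q ⊗ₖ P t) * ρ.submatrix Prod.swap Prod.swap * (Q ⊗ₖ P t)ᴴ := by
    rw [submatrix_mul _ _ _ _ _ Prod.swap_bijective, submatrix_mul _ _ _ _ _ Prod.swap_bijective,
      ← conjTranspose_submatrix, submatrix_swap_kronecker]
  simp only [trA_eq_trB_submatrix_swap, hswap, hP.sum_trB_conj]

end PartialTrace

section Separable

variable {ι I I' J J' : Type*} [Fintype ι] [Fintype I] [Fintype I'] [Fintype J] [Fintype J']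

lemma separable_sum_kronecker {σ : ι → Matrix I I ℂ} {τ : ι → Matrix J J ℂ}
    (hσ : ∀ k, (σ k).PosSemidef) (hτ : ∀ k, (τ k).PosSemidef) :
    Separable (∑ k, σ k ⊗ₖ τ k) :=
  let e := (Fintype.equivFin ι).symm
  ⟨_, σ ∘ e, τ ∘ e, fun k => hσ (e k), fun k => hτ (e k),
    (e.sum_comp fun k => σ k ⊗ₖ τ k).symm⟩

lemma Separable.posSemidef {ρ : Matrix (I × J) (I × J) ℂ} (hρ : Separable ρ) :
    ρ.PosSemidef := by
  obtain ⟨n, σ, τ, hσ, hτ, rfl⟩ := hρ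
  exact posSemidef_sum _ fun k _ => (hσ k).kronecker (hτ k)

lemma Separable.sum {ρ : ι → Matrix (I × J) (I × J) ℂ} (hρ : ∀ t, Separable (ρ t)) :
    Separable (∑ t, ρ t) := by
  choose n σ τ hσ hτ hsum using hρ
  simp only [hsum, ← Fintype.sum_sigma']
  exact separable_sum_kronecker (fun k => hσ k.fst k.snd) fun k => hτ k.fst k.snd

lemma Separable.conj_kronecker {ρ : Matrix (I × J) (I × J) ℂ} (hρ : Separable ρ)
    (P : Matrix I' I ℂ) (Q : Matrix J' J ℂ) :
    Separable ((P ⊗ₖ Q) * ρ * (P ⊗ₖ Q)ᴴ) := by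
  obtain ⟨n, σ, τ, hσ, hτ, rfl⟩ := hρ
  simp only [conjTranspose_kronecker, Matrix.mul_sum, Matrix.sum_mul, ← mul_kronecker_mul]
  exact separable_sum_kronecker (fun k => (hσ k).mul_mul_conjTranspose_same P)
    fun k => (hτ k).mul_mul_conjTranspose_same Q

end Separable

section Rules

variable {ι κ I J : Type*} [Fintype ι] [Fintype κ] [Fintype I] [Fintype J]

lemma qRHL_zero (E : Matrix I I ℂ →ₗ[ℂ] Matrix I I ℂ) (F : Matrix J J ℂ →ₗ[ℂ] Matrix J J ℂ)
    (hEpos : ∀ σ, σ.PosSemidef → (E σ).PosSemidef) (hEtr : ∀ σ, (E σ).trace = σ.trace)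
    (hFpos : ∀ τ, τ.PosSemidef → (F τ).PosSemidef) (hFtr : ∀ τ, (F τ).trace = τ.trace)
    {B : Matrix (I × J) (I × J) ℂ} (hB : B.PosSemidef) :
    qRHL 0 E F B := by
  rintro _ - ⟨n, σ, τ, hσ, hτ, rfl⟩
  have hsep : Separable (∑ k, E (σ k) ⊗ₖ F (τ k)) :=
    separable_sum_kronecker (fun k => hEpos _ (hσ k)) fun k => hFpos _ (hτ k)
  refine ⟨_, hsep.posSemidef, hsep, ?_, ?_, ?_⟩
  · simp only [trB_sum, trB_kronecker, hFtr, map_sum, map_smul]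
  · simp only [trA_sum, trA_kronecker, hEtr, map_sum, map_smul]
  · simpa using (Complex.le_def.mp (trace_mul_nonneg_of_posSemidef hB hsep.posSemidef)).1

variable [DecidableEq I] [DecidableEq J]

theorem qRHL_jointMeasurement {P : ι → Matrix I I ℂ} {Q : κ → Matrix J J ℂ}
    (hP : IsMeasurement P) (hQ : IsMeasurement Q)
    {E : ι → Matrix I I ℂ →+ Matrix I I ℂ} {F : κ → Matrix J J ℂ →+ Matrix J J ℂ}
    {A : ι → κ → Matrix (I × J) (I × J) ℂ} {B : Matrix (I × J) (I × J) ℂ}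
    (h : ∀ t u, qRHL (A t u) (E t) (F u) B) :
    qRHL (∑ t, ∑ u, (P t ⊗ₖ Q u)ᴴ * A t u * (P t ⊗ₖ Q u))
      (fun σ => ∑ t, E t (P t * σ * (P t)ᴴ)) (fun τ => ∑ u, F u (Q u * τ * (Q u)ᴴ)) B := by
  intro ρ _ hρ
  have hpost t u := hρ.conj_kronecker (P t) (Q u)
  choose ρ' _ hsep hE hF hle using fun t u => h t u _ (hpost t u).posSemidef (hpost t u)
  have hsum : Separable (∑ t, ∑ u, ρ' t u) := .sum fun t => .sum (hsep t)
  refine ⟨_, hsum.posSemidef, hsum, ?_, ?_, ?_⟩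
  · simp only [trB_sum, hE, ← map_sum, hQ.sum_trB_conj]
  · rw [Finset.sum_comm]
    simp only [trA_sum, hF, ← map_sum, hP.sum_trA_conj]
  · simp only [Matrix.sum_mul, Matrix.mul_sum, trace_sum, Complex.re_sum,
      trace_conjTranspose_mul_mul_mul]
    exact Finset.sum_le_sum fun t _ => Finset.sum_le_sum fun u _ => hle t u

theorem qRHL_jointIf_general {P : ι → Matrix I I ℂ} {Q : ι → Matrix J J ℂ}
    (hP : IsMeasurement P) (hQ : IsMeasurement Q)
    (E : ι → Matrix I I ℂ →ₗ[ℂ] Matrix I I ℂ) (F : ι → Matrix J J ℂ →ₗ[ℂ] Matrix J J ℂ)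
    (hEpos : ∀ t σ, σ.PosSemidef → (E t σ).PosSemidef) (hEtr : ∀ t σ, (E t σ).trace = σ.trace)
    (hFpos : ∀ u τ, τ.PosSemidef → (F u τ).PosSemidef) (hFtr : ∀ u τ, (F u τ).trace = τ.trace)
    (A : ι → Matrix (I × J) (I × J) ℂ) {B : Matrix (I × J) (I × J) ℂ} (hB : B.PosSemidef)
    (h : ∀ t, qRHL (A t) (E t) (F t) B) :
    qRHL (∑ t, (P t ⊗ₖ Q t)ᴴ * A t * (P t ⊗ₖ Q t))
      (fun σ => ∑ t, E t (P t * σ * (P t)ᴴ)) (fun τ => ∑ u, F u (Q u * τ * (Q u)ᴴ)) B := by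
  classical
  have hbranch t u : qRHL (if t = u then A t else 0) (E t) (F u) B := by
    split_ifs with htu
    · exact htu ▸ h t
    · exact qRHL_zero (E t) (F u) (hEpos t) (hEtr t) (hFpos u) (hFtr u) hB
  simpa using qRHL_jointMeasurement (E := fun t => (E t).toAddMonoidHom)
    (F := fun u => (F u).toAddMonoidHom) hP hQ hbranch

end Rules

/-- Rule JointIf: simultaneous if-statements on both sides, diagonal branches. -/
theorem qRHL_jointIf {X X' Y Y' : Type*}
    [Fintype X] [Fintype X'] [Fintype Y] [Fintype Y']
    [DecidableEq X] [DecidableEq X'] [DecidableEq Y] [DecidableEq Y']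
    (M : Bool → Matrix X X ℂ) (N : Bool → Matrix Y Y ℂ)
    (hM : (M true)ᴴ * M true + (M false)ᴴ * M false = 1)
    (hN : (N true)ᴴ * N true + (N false)ᴴ * N false = 1)
    (E : Bool → (Matrix (X × X') (X × X') ℂ →ₗ[ℂ] Matrix (X × X') (X × X') ℂ))
    (F : Bool → (Matrix (Y × Y') (Y × Y') ℂ →ₗ[ℂ] Matrix (Y × Y') (Y × Y') ℂ))
    (hEpos : ∀ t (ρ : Matrix (X × X') (X × X') ℂ), ρ.PosSemidef → (E t ρ).PosSemidef)
    (hEtr : ∀ t (ρ : Matrix (X × X') (X × X') ℂ), Matrix.trace (E t ρ) = Matrix.trace ρ)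
    (hFpos : ∀ u (σ : Matrix (Y × Y') (Y × Y') ℂ), σ.PosSemidef → (F u σ).PosSemidef)
    (hFtr : ∀ u (σ : Matrix (Y × Y') (Y × Y') ℂ), Matrix.trace (F u σ) = Matrix.trace σ)
    (AT AF B : Matrix ((X × X') × (Y × Y')) ((X × X') × (Y × Y')) ℂ)
    (hAT : AT.PosSemidef) (hAF : AF.PosSemidef) (hB : B.PosSemidef)
    (hT : qRHL AT (E true) (F true) B) (hF : qRHL AF (E false) (F false) B) :
    qRHL
      (((M true ⊗ₖ (1 : Matrix X' X' ℂ)) ⊗ₖ (1 : Matrix (Y × Y') (Y × Y') ℂ))ᴴ *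
          ((1 : Matrix (X × X') (X × X') ℂ) ⊗ₖ (N true ⊗ₖ (1 : Matrix Y' Y' ℂ)))ᴴ *
          AT *
          ((1 : Matrix (X × X') (X × X') ℂ) ⊗ₖ (N true ⊗ₖ (1 : Matrix Y' Y' ℂ))) *
          ((M true ⊗ₖ (1 : Matrix X' X' ℂ)) ⊗ₖ (1 : Matrix (Y × Y') (Y × Y') ℂ)) +
        ((M false ⊗ₖ (1 : Matrix X' X' ℂ)) ⊗ₖ (1 : Matrix (Y × Y') (Y × Y') ℂ))ᴴ *
          ((1 : Matrix (X × X') (X × X') ℂ) ⊗ₖ (N false ⊗ₖ (1 : Matrix Y' Y' ℂ)))ᴴ *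
          AF *
          ((1 : Matrix (X × X') (X × X') ℂ) ⊗ₖ (N false ⊗ₖ (1 : Matrix Y' Y' ℂ))) *
          ((M false ⊗ₖ (1 : Matrix X' X' ℂ)) ⊗ₖ (1 : Matrix (Y × Y') (Y × Y') ℂ)))
      (fun ρ => E true ((M true ⊗ₖ (1 : Matrix X' X' ℂ)) * ρ *
            (M true ⊗ₖ (1 : Matrix X' X' ℂ))ᴴ) +
          E false ((M false ⊗ₖ (1 : Matrix X' X' ℂ)) * ρ *
            (M false ⊗ₖ (1 : Matrix X' X' ℂ))ᴴ))
      (fun σ => F true ((N true ⊗ₖ (1 : Matrix Y' Y' ℂ)) * σ *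
            (N true ⊗ₖ (1 : Matrix Y' Y' ℂ))ᴴ) +
          F false ((N false ⊗ₖ (1 : Matrix Y' Y' ℂ)) * σ *
            (N false ⊗ₖ (1 : Matrix Y' Y' ℂ))ᴴ))
      B := by
  simp only [conj_one_kronecker_conj_kronecker_one]
  have hMX : IsMeasurement fun t => M t ⊗ₖ (1 : Matrix X' X' ℂ) :=
    IsMeasurement.kronecker_one (by simpa [IsMeasurement] using hM)
  have hNY : IsMeasurement fun t => N t ⊗ₖ (1 : Matrix Y' Y' ℂ) :=
    IsMeasurement.kronecker_one (by simpa [IsMeasurement] using hN)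
  simpa using qRHL_jointIf_general hMX hNY E F hEpos hEtr hFpos hFtr (fun t => cond t AT AF) hB
    (Bool.forall_bool.2 ⟨hF, hT⟩)
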